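/- arXiv:math/0509693 — 2 statements merged into one kernel-verified Lean document; each statement's English description precedes it below -/
import Mathlib

section
/- Let j be an odd positive integer, let Q be a nonempty finite index set, and for each q ∈ Q let c_q be a positive divisor of j and let d_q be a positive integer. Define the integer Laurent polynomial f(z) = ∏_{q∈Q} ( ∏_{k=1}^{c_q} (1 + z^{1 - 2k(j/c_q)}) )^{d_q}. Then 1 + z^j divides f in ℤ[z, z⁻¹] if and only if c_q = j for some q ∈ Q. -/
open LaurentPolynomial

/-- If the Laurent polynomial `1 + z ^ e` vanishes at a
primitive `2j`-th root of unity, then `j` divides `e`. -/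
theorem IsPrimitiveRoot.dvd_of_one_add_zpow_eq_zero {K : Type*} [Field K] {ζ : K} {j : ℕ}
    (hζ : IsPrimitiveRoot ζ (2 * j)) {e : ℤ} (he : 1 + ζ ^ e = 0) : (j : ℤ) ∣ e := by
  have hneg : ζ ^ e = -1 := by linear_combination he
  have hsq : ζ ^ (2 * e) = 1 := by
    rw [mul_comm, zpow_mul, hneg]
    norm_num
  have hdvd := (hζ.zpow_eq_one_iff_dvd _).1 hsq
  push_cast at hdvd
  exact (mul_dvd_mul_iff_left two_ne_zero).1 hdvd

/-- For an odd positive integer `j`, a nonempty finite index set `Q`, positive divisors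
`c q ∣ j` and positive multiplicities `d q`, the integer Laurent polynomial
`f(z) = ∏_{q ∈ Q} (∏_{k=1}^{c q} (1 + z^{1 - 2k(j / c q)}))^{d q}`
is divisible by `1 + z^j` in `ℤ[z, z⁻¹]` if and only if `c q = j` for some `q ∈ Q`. -/
theorem one_add_pow_dvd_iff_exists_eq (j : ℕ) (hj : 0 < j) (hodd : Odd j)
    (Q : Type) [Fintype Q] [Nonempty Q] (c d : Q → ℕ)
    (hc : ∀ q, 0 < c q) (hcj : ∀ q, c q ∣ j) (hd : ∀ q, 0 < d q) :
    (1 + T (j : ℤ)) ∣ (∏ q : Q,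
      (∏ k ∈ Finset.Icc 1 (c q), (1 + T ((1 : ℤ) - 2 * (k : ℤ) * ((j / c q : ℕ) : ℤ)))) ^ d q :
        LaurentPolynomial ℤ) ↔
    (∃ q : Q, c q = j) := by
  constructor
  · intro hdvd
    have hζ := Complex.isPrimitiveRoot_exp (2 * j) (by omega)
    set ζ := Complex.exp (2 * Real.pi * Complex.I / ((2 * j : ℕ) : ℂ))
    have hζj : ζ ^ j = -1 := (hζ.pow (by omega) (mul_comm 2 j)).eq_neg_one_of_two_right
    have hζ0 : ζ ≠ 0 := hζ.ne_zero (by omega)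
    have heval := map_dvd (eval₂ (Int.castRingHom ℂ) (Units.mk0 ζ hζ0)) hdvd
    simp only [map_add, map_one, map_prod, map_pow, eval₂_T, Units.val_zpow_eq_zpow_val,
      Units.val_mk0, zpow_natCast, Units.val_pow_eq_pow_val, hζj, add_neg_cancel, zero_dvd_iff] at heval
    obtain ⟨q, -, hq⟩ := Finset.prod_eq_zero_iff.1 heval
    obtain ⟨k, -, hk⟩ := Finset.prod_eq_zero_iff.1 (eq_zero_of_pow_eq_zero hq)
    have hje := hζ.dvd_of_one_add_zpow_eq_zero hk
    have hm : ((j / c q : ℕ) : ℤ) ∣ 1 :=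
      (dvd_sub_left (dvd_mul_left _ _)).1
        ((Int.natCast_dvd_natCast.2 (Nat.div_dvd_of_dvd (hcj q))).trans hje)
    have hm1 : j / c q = 1 := Nat.dvd_one.1 (by exact_mod_cast hm)
    exact ⟨q, by simpa [hm1] using Nat.mul_div_cancel' (hcj q)⟩
  · rintro ⟨q, hq⟩
    obtain ⟨r, hr⟩ := hodd
    refine dvd_trans ?_ (Finset.dvd_prod_of_mem _ (Finset.mem_univ q))
    refine dvd_trans ?_ (dvd_pow_self _ (hd q).ne')
    refine dvd_trans ?_ (Finset.dvd_prod_of_mem _ (a := r + 1) (by simp; omega))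
    refine ⟨T (-(j : ℤ)), ?_⟩
    rw [add_mul, one_mul, ← T_add, add_neg_cancel, T_zero, add_comm, hq, Nat.div_self hj, hr]
    push_cast
    ring_nf
end

section
/- Let k and l be positive integers and let i be an integer with i > l. Then the i-th group cohomology of the group G = ℤ/kℤ × ℤ^l with coefficients in ℤ with trivial G-action is isomorphic, as an abelian group, to (ℤ/kℤ)^{2^{l-1}}, the direct sum of 2^{l-1} copies of ℤ/kℤ. -/
open CategoryTheory Rep

universe u

namespace groupCohomology

variable {k G : Type u} [CommRing k]

/-- The embedding of a representation `A` of `G` into the coinduction to `G` of its restriction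
to the trivial subgroup. -/
noncomputable def toCoindBot [Group G] (A : Rep.{u} k G) :
    A ⟶ coind (⊥ : Subgroup G).subtype (res (⊥ : Subgroup G).subtype A) :=
  resCoindToHom _ A _ (𝟙 _)

theorem toCoindBot_injective [Group G] (A : Rep.{u} k G) :
    Function.Injective (toCoindBot A).hom := by
  intro x y h
  have := congrFun (congrArg Subtype.val h) 1
  simpa [toCoindBot] using! this

/-- An element of a commutative group `G` acts trivially on the cohomology of `G`. -/
theorem map_applyAsHom [CommGroup G] (A : Rep.{u} k G) (g : G) (n : ℕ) :
    map (MonoidHom.id G) (applyAsHom A g) n = 𝟙 (groupCohomology A n) := by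
  induction n generalizing A with
  | zero =>
    rw [← cancel_mono (H0Iso A).hom, map_id_comp_H0Iso_hom]
    have : (invariantsFunctor k G).map (applyAsHom A g) = 𝟙 _ := by
      ext x
      exact Subtype.ext (x.2 g)
    rw [this]
    exact (Category.comp_id _).trans (Category.id_comp _).symm
  | succ n ih =>
    let f := toCoindBot A
    have : Mono f := (Rep.mono_iff_injective f).2 (toCoindBot_injective A)
    let X : ShortComplex (Rep k G) := ShortComplex.mk f (Limits.cokernel.π f) (by simp)
    have hX : X.ShortExact := { exact := ShortComplex.exact_cokernel f }
    let F : X ⟶ X :=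
      { τ₁ := applyAsHom _ g
        τ₂ := applyAsHom _ g
        τ₃ := applyAsHom _ g
        comm₁₂ := applyAsHom_comm _ _
        comm₂₃ := applyAsHom_comm _ _ }
    have hz : Limits.IsZero (groupCohomology X.X₂ (n + 1)) :=
      (isZero_groupCohomology_succ_of_subsingleton _ n).of_iso (coindIso _ (n + 1))
    have := epi_δ_of_isZero hX n hz
    rw [← cancel_epi (δ hX n (n + 1) rfl)]
    refine (δ_naturality hX hX F n (n + 1) rfl).trans ?_
    rw [ih]
    exact (Category.id_comp _).trans (Category.comp_id _).symm

theorem map_applyAsHom_sub_id [CommGroup G] (A : Rep.{u} k G) (g : G) (n : ℕ) :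
    map (MonoidHom.id G) (applyAsHom A g - 𝟙 A) n = 0 := by
  have : cochainsMap (MonoidHom.id G) (applyAsHom A g - 𝟙 A) =
      cochainsMap (MonoidHom.id G) (applyAsHom A g) - cochainsMap (MonoidHom.id G) (𝟙 A) :=
    (cochainsFunctor k G).map_sub
  rw [map, this, HomologicalComplex.homologyMap_sub]
  exact sub_eq_zero.2 ((map_applyAsHom A g n).trans (map_id n).symm)

section prod

variable (k G) [CommGroup G]

/-- The subgroup `G × 1` of `G × ℤ`. -/
abbrev fstSubgroup : Subgroup (G × Multiplicative ℤ) := (MonoidHom.snd G (Multiplicative ℤ)).ker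

/-- The coinduction of the trivial representation from `G × 1` to `G × ℤ`. -/
noncomputable abbrev coindTrivial : Rep k (G × Multiplicative ℤ) :=
  coind (fstSubgroup G).subtype (trivial k (fstSubgroup G) k)

variable {k G} in
theorem coindTrivial_apply (f : coindTrivial k G) (x : G) (n : Multiplicative ℤ) :
    f.1 (x, n) = f.1 (1, n) := by
  simpa using f.2 ⟨(x, 1), rfl⟩ (1, n)

/-- The inclusion of the constant functions into `coindTrivial k G`. -/
noncomputable def constCoind :
    trivial k (G × Multiplicative ℤ) k ⟶ coindTrivial k G :=
  resCoindToHom _ _ _ (ofHom ⟨LinearMap.id, fun _ ↦ rfl⟩)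

/-- The generator of the factor `ℤ` of `G × ℤ`. -/
abbrev generator : G × Multiplicative ℤ := (1, Multiplicative.ofAdd 1)

theorem exists_forall_add_one_sub {A : Type*} [AddCommGroup A] (f : ℤ → A) :
    ∃ F : ℤ → A, ∀ n, F (n + 1) - F n = f n := by
  refine ⟨fun n ↦ ∑ i ∈ Finset.Ico 0 n, f i - ∑ i ∈ Finset.Ico n 0, f i, fun n ↦ ?_⟩
  dsimp only
  rcases le_or_gt 0 n with hn | hn
  · have : Finset.Ico 0 (n + 1) = insert n (Finset.Ico 0 n) := by ext; simp; omega
    rw [this, Finset.sum_insert (by simp), Finset.Ico_eq_empty_of_le hn,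
      Finset.Ico_eq_empty_of_le (by omega : (0 : ℤ) ≤ n + 1)]
    simp
  · have : Finset.Ico n 0 = insert n (Finset.Ico (n + 1) 0) := by ext; simp; omega
    rw [this, Finset.sum_insert (by simp), Finset.Ico_eq_empty_of_le hn.le,
      Finset.Ico_eq_empty_of_le (by omega : n + 1 ≤ (0 : ℤ))]
    simp

theorem applyAsHom_sub_id_apply (f : coindTrivial k G) (x : G) (n : ℤ) :
    ((applyAsHom (coindTrivial k G) (generator G) - 𝟙 _).hom f).1 (x, Multiplicative.ofAdd n) =
      f.1 (x, Multiplicative.ofAdd (n + 1)) - f.1 (x, Multiplicative.ofAdd n) := by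
  have : f.1 ((x, Multiplicative.ofAdd n) * generator G) =
      f.1 (x, Multiplicative.ofAdd (n + 1)) := by
    simp [ofAdd_add]
  rw [← this]
  rfl

/-- The complex `0 ⟶ k ⟶ Coind k ⟶ Coind k ⟶ 0` of representations of `G × ℤ`, whose second map
is the action of the generator of `ℤ` minus the identity. -/
noncomputable def shiftComplex : ShortComplex (Rep k (G × Multiplicative ℤ)) :=
  ShortComplex.mk (constCoind k G) (applyAsHom (coindTrivial k G) (generator G) - 𝟙 _) (by
    refine Rep.hom_ext (Representation.IntertwiningMap.ext (LinearMap.ext fun a ↦ ?_))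
    refine Subtype.ext (funext fun x ↦ ?_)
    exact (applyAsHom_sub_id_apply k G _ x.1 x.2.toAdd).trans (sub_self a))

theorem shiftComplex_shortExact : (shiftComplex k G).ShortExact where
  exact := by
    rw [← ShortComplex.exact_map_iff_of_faithful _
        (forget₂ (Rep k (G × Multiplicative ℤ)) (ModuleCat k)),
      ShortComplex.moduleCat_exact_iff]
    intro (f : coindTrivial k G) hf
    have h (n : ℤ) : f.1 (1, Multiplicative.ofAdd (n + 1)) = f.1 (1, Multiplicative.ofAdd n) := by
      rw [← sub_eq_zero, ← applyAsHom_sub_id_apply]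
      exact congrFun (congrArg Subtype.val hf) _
    have hconst (n : ℤ) : f.1 (1, Multiplicative.ofAdd n) = f.1 1 := by
      induction n with
      | zero => rfl
      | succ n ih => rw [h, ih]
      | pred n ih => rw [← ih, ← h, sub_add_cancel]
    refine ⟨f.1 1, Subtype.ext (funext fun x ↦ ?_)⟩
    exact ((coindTrivial_apply f x.1 x.2).trans (hconst x.2.toAdd)).symm
  mono_f := (Rep.mono_iff_injective _).2 fun a b h ↦ congrFun (congrArg Subtype.val h) 1
  epi_g := (Rep.epi_iff_surjective _).2 fun (f : coindTrivial k G) ↦ by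
    obtain ⟨F, hF⟩ := exists_forall_add_one_sub fun n : ℤ ↦ f.1 (1, Multiplicative.ofAdd n)
    refine ⟨⟨fun x ↦ F x.2.toAdd, fun s x ↦ ?_⟩, Subtype.ext (funext fun x ↦ ?_)⟩
    · have : s.1.2 = 1 := s.2
      simp [this]
    · refine (applyAsHom_sub_id_apply k G _ x.1 x.2.toAdd).trans ?_
      exact (hF _).trans (coindTrivial_apply f x.1 x.2).symm

/-- Inflation `Hⁿ(G, k) ⟶ Hⁿ(G × ℤ, k)` along the projection. -/
noncomputable def inflFst (n : ℕ) :
    groupCohomology (trivial k G k) n ⟶ groupCohomology (trivial k (G × Multiplicative ℤ) k) n :=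
  map (B := trivial k (G × Multiplicative ℤ) k) (MonoidHom.fst G _)
    (ofHom ⟨LinearMap.id, fun _ ↦ rfl⟩) n

/-- The map `Hⁿ(G × ℤ, k) ⟶ Hⁿ(G × ℤ, Coind k)` induced by the constant functions. -/
noncomputable def constMap (n : ℕ) :
    groupCohomology (trivial k (G × Multiplicative ℤ) k) n ⟶
      groupCohomology (coindTrivial k G) n :=
  map (A := trivial k (G × Multiplicative ℤ) k) (MonoidHom.id _) (constCoind k G) n

/-- The connecting map `Hⁿ(G × ℤ, Coind k) ⟶ Hⁿ⁺¹(G × ℤ, k)` of `shiftComplex k G`. -/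
noncomputable def shiftδ (n : ℕ) :
    groupCohomology (coindTrivial k G) n ⟶
      groupCohomology (trivial k (G × Multiplicative ℤ) k) (n + 1) :=
  δ (shiftComplex_shortExact k G) n (n + 1) rfl

theorem shiftδ_injective (n : ℕ) :
    Function.Injective (shiftδ k G n) := by
  have h := (mapShortComplex₃_exact (shiftComplex_shortExact k G) (rfl : n + 1 = n + 1))
  have := h.mono_g (map_applyAsHom_sub_id _ _ _)
  exact (ModuleCat.mono_iff_injective _).1 this

theorem range_shiftδ (n : ℕ) :
    LinearMap.range (shiftδ k G n).hom =
      LinearMap.ker (constMap k G (n + 1)).hom :=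
  (mapShortComplex₁_exact (shiftComplex_shortExact k G) rfl).moduleCat_range_eq_ker

/-- The map `Hⁿ(G × ℤ, Coind k) ⟶ Hⁿ(G, k)` induced by the inclusion of `G` and evaluation at
`1`. -/
noncomputable def evalCoind (n : ℕ) :
    groupCohomology (coindTrivial k G) n ⟶ groupCohomology (trivial k G k) n :=
  map (MonoidHom.inl G _) (ofHom ⟨LinearMap.proj 1 ∘ₗ Submodule.subtype _, fun g ↦ by
    ext (f : coindTrivial k G)
    exact (congrArg f.1 (one_mul _)).trans (coindTrivial_apply f g 1)⟩) n

theorem inflFst_comp_constMap_comp_evalCoind (n : ℕ) :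
    inflFst k G n ≫ constMap k G n ≫ evalCoind k G n = 𝟙 _ := by
  rw [inflFst, constMap, evalCoind, ← map_comp]
  refine (map_comp _ _ _ _ n).symm.trans ?_
  rw [← map_id]
  exact map_congr rfl rfl n

/-- The subgroup `G × 1` of `G × ℤ` is isomorphic to `G`. -/
def fstSubgroupEquiv : fstSubgroup G ≃* G where
  toFun x := x.1.1
  invFun g := ⟨(g, 1), rfl⟩
  left_inv x := Subtype.ext (Prod.ext rfl (Eq.symm x.2))
  right_inv _ := rfl
  map_mul' _ _ := rfl

/-- Shapiro's lemma for the subgroup `G × 1` of `G × ℤ`. -/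
noncomputable def coindTrivialIso (n : ℕ) :
    groupCohomology (coindTrivial k G) n ≅ groupCohomology (trivial k G k) n :=
  coindIso _ n ≪≫ mapIso (fstSubgroupEquiv G) (LinearEquiv.refl k k) (fun _ ↦ rfl) n

/-- A surjection between isomorphic finite modules is bijective, so the Shapiro isomorphism need
not be compared with `evalCoind`. -/
theorem evalCoind_bijective (n : ℕ) [Module.Finite k (groupCohomology (trivial k G k) n)] :
    Function.Bijective (evalCoind k G n) := by
  have hs : Function.Surjective (evalCoind k G n) := fun x ↦
    ⟨constMap k G n (inflFst k G n x),
      ConcreteCategory.congr_hom (inflFst_comp_constMap_comp_evalCoind k G n) x⟩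
  let e := (coindTrivialIso k G n).toLinearEquiv
  have := OrzechProperty.injective_of_surjective_endomorphism
    ((evalCoind k G n).hom ∘ₗ e.symm.toLinearMap) (hs.comp e.symm.surjective)
  exact ⟨by simpa using! this.comp e.injective, hs⟩

/-- The Künneth decomposition `Hⁿ⁺¹(G × ℤ, k) ≃ Hⁿ(G, k) × Hⁿ⁺¹(G, k)`. -/
theorem nonempty_addEquiv_prod (n : ℕ)
    [Module.Finite k (groupCohomology (trivial k G k) (n + 1))] :
    Nonempty (groupCohomology (trivial k (G × Multiplicative ℤ) k) (n + 1) ≃+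
      groupCohomology (trivial k G k) n × groupCohomology (trivial k G k) (n + 1)) := by
  let d := (shiftδ k G n).hom
  let q := (constMap k G (n + 1) ≫ evalCoind k G (n + 1)).hom
  have hdq : Function.Exact d q := by
    refine LinearMap.exact_iff.2 (Eq.trans ?_ (range_shiftδ k G n).symm)
    exact LinearMap.ker_comp_of_ker_eq_bot _
      (LinearMap.ker_eq_bot.2 (evalCoind_bijective k G (n + 1)).1)
  obtain ⟨e, -⟩ := hdq.splitSurjectiveEquiv (shiftδ_injective k G n)
    ⟨(inflFst k G (n + 1)).hom, LinearMap.ext fun x ↦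
      ConcreteCategory.congr_hom (inflFst_comp_constMap_comp_evalCoind k G (n + 1)) x⟩
  exact ⟨(e.trans ((coindTrivialIso k G n).toLinearEquiv.prodCongr (.refl _ _))).toAddEquiv⟩

end prod

section cyclic

open Rep.FiniteCyclicGroup

theorem norm_trivial (k : ℕ) [NeZero k] (x : ℤ) :
    (trivial ℤ (Multiplicative (ZMod k)) ℤ).norm.hom x = k * x := by
  simp [Rep.norm, Representation.norm]

theorem mem_zpowers_ofAdd_one (k : ℕ) [NeZero k] (x : Multiplicative (ZMod k)) :
    x ∈ Subgroup.zpowers (Multiplicative.ofAdd (1 : ZMod k)) := by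
  obtain ⟨m, hm⟩ := ZMod.intCast_surjective x.toAdd
  exact ⟨m, by simp [← ofAdd_zsmul, hm]⟩

theorem groupCohomologyπEven_surjective {k G : Type u} [CommRing k] [CommGroup G] [Fintype G]
    (A : Rep.{u} k G) (g : G) (hg : ∀ x, x ∈ Subgroup.zpowers g) (i : ℕ) [NeZero i]
    (hi : Even i) : Function.Surjective (groupCohomologyπEven A g hg i hi) := by
  exact (ModuleCat.epi_iff_surjective _).1
    (epi_comp' (IsIso.epi_of_iso (normHomCompSub A g).moduleCatCyclesIso.inv)
      (epi_comp (normHomCompSub A g).homologyπ (groupCohomologyIsoEven A g hg i hi).inv))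

theorem groupCohomologyπOdd_surjective {k G : Type u} [CommRing k] [CommGroup G] [Fintype G]
    (A : Rep.{u} k G) (g : G) (hg : ∀ x, x ∈ Subgroup.zpowers g) (i : ℕ)
    (hi : Odd i) : Function.Surjective (groupCohomologyπOdd A g hg i hi) := by
  exact (ModuleCat.epi_iff_surjective _).1
    (epi_comp' (IsIso.epi_of_iso (subCompNormHom A g).moduleCatCyclesIso.inv)
      (epi_comp (subCompNormHom A g).homologyπ (groupCohomologyIsoOdd A g hg i hi).inv))

theorem subsingleton_zmod_of_odd (k : ℕ) [NeZero k] (i : ℕ) (hi : Odd i) :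
    Subsingleton (groupCohomology (trivial ℤ (Multiplicative (ZMod k)) ℤ) i) := by
  have hs := groupCohomologyπOdd_surjective (trivial ℤ (Multiplicative (ZMod k)) ℤ) _
    (mem_zpowers_ofAdd_one k) i hi
  have : Subsingleton (LinearMap.ker
      (trivial ℤ (Multiplicative (ZMod k)) ℤ).norm.hom.toLinearMap) := by
    refine (Submodule.subsingleton_iff_eq_bot).2 ((Submodule.eq_bot_iff _).2 fun (x : ℤ) hx ↦ ?_)
    have : (k : ℤ) * x = 0 := (norm_trivial k x).symm.trans hx
    exact (mul_eq_zero.1 this).resolve_left (by exact_mod_cast NeZero.ne k)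
  exact hs.subsingleton

theorem nonempty_addEquiv_zmod_of_even (k : ℕ) [NeZero k] (i : ℕ) [NeZero i] (hi : Even i) :
    Nonempty (groupCohomology (trivial ℤ (Multiplicative (ZMod k)) ℤ) i ≃+ ZMod k) := by
  let A := trivial ℤ (Multiplicative (ZMod k)) ℤ
  let g := Multiplicative.ofAdd (1 : ZMod k)
  let p := groupCohomologyπEven A g (mem_zpowers_ofAdd_one k) i hi
  have hp : Function.Surjective p := groupCohomologyπEven_surjective _ _ _ _ _
  have h0 (x : ℤ) : x ∈ LinearMap.ker (applyAsHom A g - 𝟙 A).hom.toLinearMap :=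
    sub_self x
  let f : ℤ →+ groupCohomology A i :=
    p.hom.toAddMonoidHom.comp ((LinearMap.id (R := ℤ) (M := ℤ)).codRestrict _ h0).toAddMonoidHom
  have hf : Function.Surjective f := fun y ↦ by
    obtain ⟨x, rfl⟩ := hp y
    exact ⟨x.1, rfl⟩
  have hker : f.ker = AddSubgroup.zmultiples (k : ℤ) := by
    ext x
    refine (groupCohomologyπEven_eq_zero_iff A g (mem_zpowers_ofAdd_one k) i hi ⟨x, h0 x⟩).trans ?_
    rw [Int.mem_zmultiples_iff]
    constructor
    · rintro ⟨y, hy⟩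
      exact ⟨y, hy.symm.trans (norm_trivial k y)⟩
    · rintro ⟨y, hy⟩
      exact ⟨y, (norm_trivial k y).trans hy.symm⟩
  exact ⟨(QuotientAddGroup.quotientKerEquivOfSurjective f hf).symm.trans
    ((QuotientAddGroup.quotientAddEquivOfEq hker).trans (Int.quotientZMultiplesNatEquivZMod k))⟩

/-- The rank over `ℤ/kℤ` of the cohomology of `ℤ/kℤ × ℤˡ` in degree `i > l`. -/
def rankZModProd : ℕ → ℕ → ℕ
  | 0, i => if Even i then 1 else 0
  | l + 1, i => rankZModProd l (i - 1) + rankZModProd l i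

theorem rankZModProd_add_succ (l : ℕ) : ∀ i, l ≤ i →
    rankZModProd l i + rankZModProd l (i + 1) = 2 ^ l := by
  induction l with
  | zero => intro i _; by_cases h : Even i <;> simp [rankZModProd, h, Nat.even_add_one]
  | succ l ih =>
    intro i hi
    obtain ⟨i, rfl⟩ : ∃ j, i = j + 1 := ⟨i - 1, by omega⟩
    have h₁ := ih i (by omega)
    have h₂ := ih (i + 1) (by omega)
    simp only [rankZModProd, Nat.add_sub_cancel, pow_succ]
    omega

/-- Splitting off the first coordinate of `ℤˡ⁺¹`. -/
def prodFinSuccEquiv (A : Type*) [AddCommGroup A] (l : ℕ) :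
    Multiplicative (A × (Fin (l + 1) → ℤ)) ≃*
      Multiplicative (A × (Fin l → ℤ)) × Multiplicative ℤ where
  toFun x := (.ofAdd (x.toAdd.1, Fin.tail x.toAdd.2), .ofAdd (x.toAdd.2 0))
  invFun y := .ofAdd (y.1.toAdd.1, Fin.cons y.2.toAdd y.1.toAdd.2)
  left_inv x := by simp
  right_inv y := by simp
  map_mul' _ _ := rfl

/-- `ℤ⁰` is trivial. -/
def prodFinZeroEquiv (A : Type*) [AddCommGroup A] :
    Multiplicative (A × (Fin 0 → ℤ)) ≃* Multiplicative A :=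
  AddEquiv.toMultiplicative AddEquiv.prodUnique

/-- Isomorphic groups have isomorphic cohomology with trivial integral coefficients. -/
noncomputable def trivialAddEquiv {G H : Type} [Group G] [Group H] (e : G ≃* H) (n : ℕ) :
    groupCohomology (trivial ℤ G ℤ) n ≃+ groupCohomology (trivial ℤ H ℤ) n :=
  (mapIso e (LinearEquiv.refl ℤ ℤ) (fun _ ↦ rfl) n).toLinearEquiv.toAddEquiv

theorem nonempty_addEquiv_rankZModProd (k : ℕ) [NeZero k] (l : ℕ) : ∀ i, l < i →
    Nonempty (groupCohomology (trivial ℤ (Multiplicative (ZMod k × (Fin l → ℤ))) ℤ) i ≃+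
      (Fin (rankZModProd l i) → ZMod k)) := by
  induction l with
  | zero =>
    intro i hi
    have : NeZero i := ⟨hi.ne'⟩
    let e := trivialAddEquiv (prodFinZeroEquiv (ZMod k)) i
    by_cases h : Even i
    · obtain ⟨e'⟩ := nonempty_addEquiv_zmod_of_even k i h
      rw [rankZModProd, if_pos h]
      exact ⟨e.trans (e'.trans (AddEquiv.funUnique (Fin 1) (ZMod k)).symm)⟩
    · have := subsingleton_zmod_of_odd k i (Nat.not_even_iff_odd.1 h)
      rw [rankZModProd, if_neg h]
      have := uniqueOfSubsingleton
        (0 : groupCohomology (trivial ℤ (Multiplicative (ZMod k)) ℤ) i)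
      exact ⟨e.trans AddEquiv.ofUnique⟩
  | succ l ih =>
    intro i hi
    obtain ⟨i, rfl⟩ : ∃ j, i = j + 1 := ⟨i - 1, by omega⟩
    obtain ⟨e₁⟩ := ih i (by omega)
    obtain ⟨e₂⟩ := ih (i + 1) (by omega)
    have : Module.Finite ℤ
        (groupCohomology (trivial ℤ (Multiplicative (ZMod k × (Fin l → ℤ))) ℤ) (i + 1)) :=
      have := Finite.of_equiv _ e₂.symm.toEquiv
      inferInstance
    obtain ⟨e⟩ := nonempty_addEquiv_prod ℤ (Multiplicative (ZMod k × (Fin l → ℤ))) i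
    exact ⟨(trivialAddEquiv (prodFinSuccEquiv (ZMod k) l) (i + 1)).trans
      (e.trans ((e₁.prodCongr e₂).trans
        ((LinearEquiv.sumArrowLequivProdArrow _ _ ℤ (ZMod k)).symm.toAddEquiv.trans
          (LinearEquiv.funCongrLeft ℤ (ZMod k) finSumFinEquiv.symm).toAddEquiv)))⟩

end cyclic
end groupCohomology

/-- For positive integers `k`, `l` and any degree `i > l`, the `i`-th group cohomology of
`G = ℤ/kℤ × ℤˡ` (with trivial action on `ℤ`) is isomorphic as an abelian group to
`(ℤ/kℤ)^{2^{l-1}}`. -/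
theorem groupCohomology_zmod_prod_free_abelian (k l : ℕ) (hk : 0 < k) (hl : 0 < l)
    (i : ℕ) (hi : l < i) :
    Nonempty
      ((groupCohomology
          (Rep.trivial ℤ (Multiplicative (ZMod k × (Fin l → ℤ))) ℤ) i) ≃+
        (Fin (2 ^ (l - 1)) → ZMod k)) := by
  have : NeZero k := ⟨hk.ne'⟩
  obtain ⟨l, rfl⟩ : ∃ m, l = m + 1 := ⟨l - 1, by omega⟩
  obtain ⟨i, rfl⟩ : ∃ j, i = j + 1 := ⟨i - 1, by omega⟩
  have h : groupCohomology.rankZModProd (l + 1) (i + 1) = 2 ^ (l + 1 - 1) :=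
    groupCohomology.rankZModProd_add_succ l i (by omega)
  exact h ▸ groupCohomology.nonempty_addEquiv_rankZModProd k (l + 1) (i + 1) hi
end
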